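/- Let n ≥ 1, 1 ≤ p₂ ≤ p₁ < ∞, and 0 < α < n. If f ∈ S_{p₁,α}(ℝ^n) and there exist c > 0 and 0 < σ < α p₂/p₁ such that η_{p₁,α}f(r) ≤ c r^{σ/p₂} for every r > 0, then f belongs to the Morrey space L^{p₂, n + σ − α p₂/p₁}(ℝ^n). -/

import Mathlib

/-! The idea is to bound, on each ball `B = B(x, r)`, the singular weight from below:
`|x - y|^{-(n-α)} ≥ r^{-(n-α)}` for `y ∈ B \ {x}`, so that
`(∫_B |f|^{p₁})^{1/p₁} ≤ r^{(n-α)/p₁} η_{p₁,α}f(r)` (`lintegral_ball_rpow_le_stummelModA`).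
Hölder's inequality gives
`(∫_B |f|^{p₂})^{1/p₂} ≤ |B|^{1/p₂ - 1/p₁} (∫_B |f|^{p₁})^{1/p₁}`,
and with `|B| = |B(0,1)| r^n` and the growth bound `η_{p₁,α}f(r) ≤ c r^{σ/p₂}` the powers of `r`
combine to `(n-α)/p₁ + σ/p₂ + n (1/p₂ - 1/p₁) = (n + σ - α p₂/p₁)/p₂`. The Morrey norm is thus at
most `c |B(0,1)|^{1/p₂ - 1/p₁}`. -/

open MeasureTheory Metric Filter Set ENNReal

noncomputable section

/-- Euclidean space ℝ^n. -/
abbrev Euc (n : ℕ) := EuclideanSpace ℝ (Fin n)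

/-- Stummel p-modulus with general weight Ψ:
`η_{p,Ψ}f(r) = sup_x ( ∫_{|x-y|<r} |f(y)|^p Ψ(|x-y|)/|x-y|^n dy )^{1/p}`. -/
noncomputable def stummelMod (n : ℕ) (p : ℝ) (Ψ : ℝ → ℝ) (f : Euc n → ℝ) (r : ℝ) : ℝ≥0∞ :=
  ⨆ x : Euc n,
    (∫⁻ y in ball x r,
        ENNReal.ofReal (|f y| ^ p * Ψ (dist x y) / dist x y ^ (n : ℝ))) ^ (1 / p)

/-- Stummel p-modulus with power weight Ψ(t) = t^α:
`η_{p,α}f(r) = sup_x ( ∫_{|x-y|<r} |f(y)|^p / |x-y|^{n-α} dy )^{1/p}`. -/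
noncomputable def stummelModA (n : ℕ) (p α : ℝ) (f : Euc n → ℝ) (r : ℝ) : ℝ≥0∞ :=
  ⨆ x : Euc n,
    (∫⁻ y in ball x r,
        ENNReal.ofReal (|f y| ^ p / dist x y ^ ((n : ℝ) - α))) ^ (1 / p)

/-- f ∈ L^p_loc(ℝ^n). -/
def MemLocLp (n : ℕ) (p : ℝ) (f : Euc n → ℝ) : Prop :=
  LocallyIntegrable (fun y => |f y| ^ p) volume

/-- The generalized Stummel p-class `S_{p,Ψ}`. -/
def MemStummel (n : ℕ) (p : ℝ) (Ψ : ℝ → ℝ) (f : Euc n → ℝ) : Prop :=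
  MemLocLp n p f ∧ (∀ r > 0, stummelMod n p Ψ f r < ⊤) ∧
    Tendsto (stummelMod n p Ψ f) (nhdsWithin 0 (Ioi 0)) (nhds 0)

/-- The Stummel p-class `S_{p,α}` (power weight). -/
def MemStummelA (n : ℕ) (p α : ℝ) (f : Euc n → ℝ) : Prop :=
  MemLocLp n p f ∧ (∀ r > 0, stummelModA n p α f r < ⊤) ∧
    Tendsto (stummelModA n p α f) (nhdsWithin 0 (Ioi 0)) (nhds 0)

/-- The bounded Stummel modulus class `S̃_{p,α}`. -/
def MemStummelBddA (n : ℕ) (p α : ℝ) (f : Euc n → ℝ) : Prop :=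
  MemLocLp n p f ∧ ∀ r > 0, stummelModA n p α f r < ⊤

/-- Generalized Morrey norm `‖f‖_{L^{p,Ψ}}`. -/
noncomputable def morreyNorm (n : ℕ) (p : ℝ) (Ψ : ℝ → ℝ) (f : Euc n → ℝ) : ℝ≥0∞ :=
  ⨆ (x : Euc n) (r : ℝ) (_ : 0 < r),
    (volume (ball x r))⁻¹ ^ (1 / p) * ENNReal.ofReal (Ψ r)⁻¹ *
      (∫⁻ y in ball x r, ENNReal.ofReal (|f y| ^ p)) ^ (1 / p)

/-- The generalized Morrey space `L^{p,Ψ}`. -/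
def MemMorrey (n : ℕ) (p : ℝ) (Ψ : ℝ → ℝ) (f : Euc n → ℝ) : Prop :=
  MemLocLp n p f ∧ morreyNorm n p Ψ f < ⊤

/-- Classical Morrey norm `‖f‖_{L^{p,λ}}`. -/
noncomputable def morreyNormC (n : ℕ) (p lam : ℝ) (f : Euc n → ℝ) : ℝ≥0∞ :=
  ⨆ (x : Euc n) (r : ℝ) (_ : 0 < r),
    ENNReal.ofReal (r ^ (-(lam / p))) *
      (∫⁻ y in ball x r, ENNReal.ofReal (|f y| ^ p)) ^ (1 / p)

/-- The classical Morrey space `L^{p,λ}`. -/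
def MemMorreyC (n : ℕ) (p lam : ℝ) (f : Euc n → ℝ) : Prop :=
  MemLocLp n p f ∧ morreyNormC n p lam f < ⊤

/-- Generalized weak Morrey norm `‖f‖_{wL^{p,Ψ}}`. -/
noncomputable def weakMorreyNorm (n : ℕ) (p : ℝ) (Ψ : ℝ → ℝ) (f : Euc n → ℝ) : ℝ≥0∞ :=
  ⨆ (x : Euc n) (r : ℝ) (_ : 0 < r) (t : ℝ) (_ : 0 < t),
    ENNReal.ofReal t * (volume {y ∈ ball x r | t < |f y|}) ^ (1 / p) /
      (ENNReal.ofReal (Ψ r) * (volume (ball x r)) ^ (1 / p))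

/-- The generalized weak Morrey space `wL^{p,Ψ}`. -/
def MemWeakMorrey (n : ℕ) (p : ℝ) (Ψ : ℝ → ℝ) (f : Euc n → ℝ) : Prop :=
  Measurable f ∧ weakMorreyNorm n p Ψ f < ⊤

/-- Classical weak Morrey norm `‖f‖_{wL^{p,λ}}`. -/
noncomputable def weakMorreyNormC (n : ℕ) (p lam : ℝ) (f : Euc n → ℝ) : ℝ≥0∞ :=
  ⨆ (x : Euc n) (r : ℝ) (_ : 0 < r) (t : ℝ) (_ : 0 < t),
    ENNReal.ofReal (r ^ (-(lam / p))) * ENNReal.ofReal t *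
      (volume {y ∈ ball x r | t < |f y|}) ^ (1 / p)

/-- The classical weak Morrey space `wL^{p,λ}`. -/
def MemWeakMorreyC (n : ℕ) (p lam : ℝ) (f : Euc n → ℝ) : Prop :=
  Measurable f ∧ weakMorreyNormC n p lam f < ⊤

/-- Decreasing rearrangement `f*(t) = inf{σ > 0 : |{|f| > σ}| ≤ t}`. -/
noncomputable def rearrangement (n : ℕ) (f : Euc n → ℝ) (t : ℝ) : ℝ :=
  sInf {σ : ℝ | 0 < σ ∧ volume {x : Euc n | σ < |f x|} ≤ ENNReal.ofReal t}

/-- Lorentz norm `‖f‖_{L^p_κ} = ( ∫₀^∞ (t^{1/κ} f*(t))^p dt/t )^{1/p}`. -/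
noncomputable def lorentzNorm (n : ℕ) (kappa p : ℝ) (f : Euc n → ℝ) : ℝ≥0∞ :=
  (∫⁻ t in Ioi (0 : ℝ),
      ENNReal.ofReal ((t ^ (1 / kappa) * rearrangement n f t) ^ p / t)) ^ (1 / p)

/-- The Lorentz space `L^p_κ`. -/
def MemLorentz (n : ℕ) (kappa p : ℝ) (f : Euc n → ℝ) : Prop :=
  Measurable f ∧ lorentzNorm n kappa p f < ⊤

end

/-- Local `L^p` membership makes `|f|` almost everywhere measurable, although `f` itself
need not be. -/
lemma MemLocLp.aemeasurable_abs {n : ℕ} {p : ℝ} {f : Euc n → ℝ} (hp : 0 < p)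
    (hf : MemLocLp n p f) : AEMeasurable (fun y => |f y|) (volume : Measure (Euc n)) := by
  have h : AEMeasurable (fun y => |f y| ^ p) (volume : Measure (Euc n)) :=
    LocallyIntegrable.aestronglyMeasurable hf |>.aemeasurable
  have h2 := h.pow_const (1 / p)
  refine h2.congr (Eventually.of_forall fun y => ?_)
  simp only
  rw [← Real.rpow_mul (abs_nonneg _), mul_one_div_cancel hp.ne', Real.rpow_one]

/-- Hölder's inequality on a ball, with no measurability required of `f` beyond that of `|f|`. -/
lemma lintegral_ball_rpow_holder {n : ℕ} {p q : ℝ} {f : Euc n → ℝ} (hp : 0 < p) (hpq : p ≤ q)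
    (hf : AEMeasurable (fun y => |f y|) (volume : Measure (Euc n))) (x : Euc n) (r : ℝ) :
    (∫⁻ y in ball x r, ENNReal.ofReal (|f y| ^ p)) ^ (1 / p) ≤
      (∫⁻ y in ball x r, ENNReal.ofReal (|f y| ^ q)) ^ (1 / q) *
        volume (ball x r) ^ (1 / p - 1 / q) := by
  have h := eLpNorm'_le_eLpNorm'_mul_rpow_measure_univ (μ := volume.restrict (ball x r)) hp hpq
    hf.restrict.aestronglyMeasurable
  have e : ∀ s : ℝ, 0 < s → ∀ y, ‖|f y|‖ₑ ^ s = ENNReal.ofReal (|f y| ^ s) := fun s hs y => by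
    rw [Real.enorm_of_nonneg (abs_nonneg _), ENNReal.ofReal_rpow_of_nonneg (abs_nonneg _) hs.le]
  simpa only [eLpNorm', e p hp, e q (hp.trans_le hpq), Measure.restrict_apply_univ] using h

/-- The singular weight is at least `r^{-(n-α)}` on a punctured ball of radius `r`. -/
lemma lintegral_ball_rpow_le_stummelModA {n : ℕ} (hn : 1 ≤ n) {p α : ℝ} (hp : 0 < p)
    (hαn : α < n) (f : Euc n → ℝ) (x : Euc n) {r : ℝ} (hr : 0 < r) :
    (∫⁻ y in ball x r, ENNReal.ofReal (|f y| ^ p)) ^ (1 / p) ≤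
      ENNReal.ofReal (r ^ (((n : ℝ) - α) / p)) * stummelModA n p α f r := by
  have : Nonempty (Fin n) := ⟨⟨0, hn⟩⟩
  have hle : ∫⁻ y in ball x r, ENNReal.ofReal (|f y| ^ p) ≤
      ENNReal.ofReal (r ^ ((n : ℝ) - α)) *
        ∫⁻ y in ball x r, ENNReal.ofReal (|f y| ^ p / dist x y ^ ((n : ℝ) - α)) := by
    rw [← lintegral_const_mul' _ _ ENNReal.ofReal_ne_top]
    refine lintegral_mono_ae ?_
    -- The center is discarded: there the weight takes the junk value `1 / 0 = 0`.
    have hne : ∀ᵐ y ∂(volume.restrict (ball x r)), y ≠ x :=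
      ae_restrict_of_ae (Measure.ae_ne volume x)
    filter_upwards [hne, ae_restrict_mem measurableSet_ball] with y hy hyb
    rw [← ENNReal.ofReal_mul (by positivity)]
    refine ENNReal.ofReal_le_ofReal ?_
    have hd : 0 < dist x y := dist_pos.2 hy.symm
    have hd' : dist x y ≤ r := by rw [dist_comm]; exact (mem_ball.1 hyb).le
    have hpow : dist x y ^ ((n : ℝ) - α) ≤ r ^ ((n : ℝ) - α) :=
      Real.rpow_le_rpow hd.le hd' (by linarith)
    rw [← mul_div_assoc, le_div_iff₀ (by positivity), mul_comm]
    gcongr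
  calc _ ≤ (ENNReal.ofReal (r ^ ((n : ℝ) - α)) *
        ∫⁻ y in ball x r,
          ENNReal.ofReal (|f y| ^ p / dist x y ^ ((n : ℝ) - α))) ^ (1 / p) :=
        ENNReal.rpow_le_rpow hle (by positivity)
    _ = ENNReal.ofReal (r ^ (((n : ℝ) - α) / p)) *
        (∫⁻ y in ball x r,
          ENNReal.ofReal (|f y| ^ p / dist x y ^ ((n : ℝ) - α))) ^ (1 / p) := by
        rw [ENNReal.mul_rpow_of_nonneg _ _ (by positivity),
          ENNReal.ofReal_rpow_of_nonneg (by positivity) (by positivity), ← Real.rpow_mul hr.le,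
          mul_one_div]
    _ ≤ _ := by
        gcongr
        exact le_iSup (fun x : Euc n => (∫⁻ y in ball x r,
          ENNReal.ofReal (|f y| ^ p / dist x y ^ ((n : ℝ) - α))) ^ (1 / p)) x

/-- If `f ∈ S_{p₁,α}(ℝ^n)` and `η_{p₁,α}f(r) ≤ c r^{σ/p₂}` for every `r > 0`,
where `0 < σ < α p₂/p₁`, then `f ∈ L^{p₂, n + σ − α p₂/p₁}(ℝ^n)`. -/
theorem stummel_subset_morrey_classical (n : ℕ) (hn : 1 ≤ n) (p₁ p₂ α : ℝ)
    (hp₂ : 1 ≤ p₂) (hp : p₂ ≤ p₁) (hα : 0 < α) (hαn : α < n)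
    (f : Euc n → ℝ) (hf : MemStummelA n p₁ α f)
    (c σ : ℝ) (hc : 0 < c) (hσ₀ : 0 < σ) (hσ₁ : σ < α * p₂ / p₁)
    (hbound : ∀ r > 0, stummelModA n p₁ α f r ≤ ENNReal.ofReal (c * r ^ (σ / p₂))) :
    MemMorreyC n p₂ ((n : ℝ) + σ - α * p₂ / p₁) f := by
  have hp₂0 : 0 < p₂ := by linarith
  have hp₁0 : 0 < p₁ := by linarith
  have hθ : 0 ≤ 1 / p₂ - 1 / p₁ := sub_nonneg.2 (one_div_le_one_div_of_le hp₂0 hp)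
  have hm := hf.1.aemeasurable_abs hp₁0
  refine ⟨?_, ?_⟩
  · -- Since `p₂ ≤ p₁`, the pointwise bound `|f|^{p₂} ≤ 1 + |f|^{p₁}` gives local integrability.
    have h1 : LocallyIntegrable (fun y : Euc n => 1 + |f y| ^ p₁) volume :=
      (locallyIntegrable_const 1).add hf.1
    refine h1.mono (hm.pow_const p₂).aestronglyMeasurable (Eventually.of_forall fun y => ?_)
    have ha := abs_nonneg (f y)
    rw [Real.norm_of_nonneg (by positivity), Real.norm_of_nonneg (by positivity)]
    rcases le_total |f y| 1 with h | h
    · have := Real.rpow_le_one ha h hp₂0.le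
      have : 0 ≤ |f y| ^ p₁ := by positivity
      linarith
    · have := Real.rpow_le_rpow_of_exponent_le h hp
      linarith
  · have hV : volume (ball (0 : Euc n) 1) ^ (1 / p₂ - 1 / p₁) < ⊤ :=
      ENNReal.rpow_lt_top_of_nonneg hθ measure_ball_lt_top.ne
    refine lt_of_le_of_lt (iSup_le fun x => iSup_le fun r => iSup_le fun hr => ?_)
      (ENNReal.mul_lt_top (ENNReal.ofReal_lt_top (r := c)) hV)
    have hvol : volume (ball x r) ^ (1 / p₂ - 1 / p₁) =
        ENNReal.ofReal (r ^ ((n : ℝ) * (1 / p₂ - 1 / p₁))) *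
          volume (ball (0 : Euc n) 1) ^ (1 / p₂ - 1 / p₁) := by
      rw [Measure.addHaar_ball_of_pos volume x hr, finrank_euclideanSpace_fin,
        ENNReal.mul_rpow_of_nonneg _ _ hθ,
        ENNReal.ofReal_rpow_of_nonneg (by positivity) hθ, ← Real.rpow_natCast,
        ← Real.rpow_mul hr.le]
    have hexp : r ^ (-(((n : ℝ) + σ - α * p₂ / p₁) / p₂)) *
        (r ^ (((n : ℝ) - α) / p₁) * (c * r ^ (σ / p₂)) *
          r ^ ((n : ℝ) * (1 / p₂ - 1 / p₁))) = c := by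
      have : -(((n : ℝ) + σ - α * p₂ / p₁) / p₂) + ((n : ℝ) - α) / p₁ + σ / p₂ +
          (n : ℝ) * (1 / p₂ - 1 / p₁) = 0 := by
        field_simp
        ring
      calc _ = c * (r ^ (-(((n : ℝ) + σ - α * p₂ / p₁) / p₂)) * r ^ (((n : ℝ) - α) / p₁) *
            r ^ (σ / p₂) * r ^ ((n : ℝ) * (1 / p₂ - 1 / p₁))) := by ring
        _ = c := by
          rw [← Real.rpow_add hr, ← Real.rpow_add hr, ← Real.rpow_add hr, this, Real.rpow_zero,
            mul_one]
    calc _ ≤ ENNReal.ofReal (r ^ (-(((n : ℝ) + σ - α * p₂ / p₁) / p₂))) *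
          (ENNReal.ofReal (r ^ (((n : ℝ) - α) / p₁)) * ENNReal.ofReal (c * r ^ (σ / p₂)) *
            volume (ball x r) ^ (1 / p₂ - 1 / p₁)) := by
          gcongr
          refine (lintegral_ball_rpow_holder hp₂0 hp hm x r).trans ?_
          gcongr
          refine (lintegral_ball_rpow_le_stummelModA hn hp₁0 hαn f x hr).trans ?_
          gcongr
          exact hbound r hr
      _ = ENNReal.ofReal c * volume (ball (0 : Euc n) 1) ^ (1 / p₂ - 1 / p₁) := by
          rw [hvol, ← mul_assoc, ← mul_assoc, ← ENNReal.ofReal_mul (by positivity),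
            ← ENNReal.ofReal_mul (by positivity), ← mul_assoc,
            ← ENNReal.ofReal_mul (by positivity), mul_assoc (r ^ _), mul_assoc (r ^ _), hexp]
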